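/- arXiv:2103.14246 — 4 statements merged into one kernel-verified Lean document; each statement's English description precedes it below -/
import Mathlib

section
/- With the one-step Bellman setup, the Taylor estimator of the backward difference is unbiased: E[ΔŶ | 𝒢] = E[ΔY | 𝒢] = −L(X) almost surely. -/
open MeasureTheory ProbabilityTheory Matrix

/-- The standard Gaussian measure on `ℝⁿ` (coordinates i.i.d. `N(0,1)`). -/
noncomputable def stdGaussian (n : ℕ) : Measure (Fin n → ℝ) :=
  Measure.pi fun _ => gaussianReal 0 1

/-- The gradient of `f : ℝⁿ → ℝ`, as a vector of partial derivatives. -/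
noncomputable def grad {n : ℕ} (f : (Fin n → ℝ) → ℝ) (x : Fin n → ℝ) : Fin n → ℝ :=
  fun i => fderiv ℝ f x (Pi.single i 1)

/-- The Hessian matrix of `f : ℝⁿ → ℝ`. -/
noncomputable def hess {n : ℕ} (f : (Fin n → ℝ) → ℝ) (x : Fin n → ℝ) :
    Matrix (Fin n) (Fin n) ℝ :=
  Matrix.of fun i j => fderiv ℝ (fun y => fderiv ℝ f y (Pi.single j 1)) x (Pi.single i 1)

/-!
Since `X` is `𝒢`-measurable and `W` is independent of `𝒢`, conditioning a function of `(X, W)` on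
`𝒢` freezes `X` and averages over the law of `W`. Averaging `V'(X')` gives `V(X) - L(X)` by the
Bellman equation. In the Taylor estimator the coefficients `Z̄` and `M̄` are frozen, and averaging
kills the linear term because `E W = 0` and the quadratic term because `E[W Wᵀ] = I`.
-/

section Freezing

variable {Ω G E : Type*} {𝒢 mΩ : MeasurableSpace Ω} [MeasurableSpace G] [MeasurableSpace E]
  {P : Measure Ω} [IsFiniteMeasure P] {X : Ω → G} {W : Ω → E}
  {B : Type*} [NormedAddCommGroup B] [NormedSpace ℝ B]

theorem map_prodMk_restrict_of_indep (h𝒢 : 𝒢 ≤ mΩ) (hW : Measurable W)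
    (hWindep : Indep (MeasurableSpace.comap W inferInstance) 𝒢 P) (hX : Measurable[𝒢] X)
    {s : Set Ω} (hs : MeasurableSet[𝒢] s) :
    (P.restrict s).map (fun ω => (X ω, W ω)) = ((P.restrict s).map X).prod (P.map W) := by
  have hX_amb : Measurable X := hX.mono h𝒢 le_rfl
  refine (Measure.prod_eq fun A C hA hC => ?_).symm
  have hindep : P (W ⁻¹' C ∩ (X ⁻¹' A ∩ s)) = P (W ⁻¹' C) * P (X ⁻¹' A ∩ s) :=
    (Indep_iff _ _ _).1 hWindep _ _ ⟨C, hC, rfl⟩ ((hX hA).inter hs)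
  rw [Measure.map_apply (hX_amb.prodMk hW) (hA.prod hC), Measure.map_apply hX_amb hA,
    Measure.map_apply hW hC, Measure.restrict_apply' (h𝒢 s hs), Measure.restrict_apply' (h𝒢 s hs),
    mul_comm, ← hindep, Set.mk_preimage_prod, Set.inter_comm (X ⁻¹' A), Set.inter_assoc]

theorem condExp_comp_prodMk_of_indep [CompleteSpace B] (h𝒢 : 𝒢 ≤ mΩ) (hW : Measurable W)
    (hWindep : Indep (MeasurableSpace.comap W inferInstance) 𝒢 P) (hX : Measurable[𝒢] X)
    {f : G × E → B} (hf : StronglyMeasurable f) (hfint : Integrable (fun ω => f (X ω, W ω)) P) :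
    P[fun ω => f (X ω, W ω)|𝒢] =ᵐ[P] fun ω => ∫ w, f (X ω, w) ∂(P.map W) := by
  have hX_amb : Measurable X := hX.mono h𝒢 le_rfl
  have hXW : Measurable fun ω => (X ω, W ω) := hX_amb.prodMk hW
  have havg : StronglyMeasurable fun x => ∫ w, f (x, w) ∂(P.map W) := hf.integral_prod_right'
  have hint_prod {s : Set Ω} (hs : MeasurableSet[𝒢] s) :
      Integrable f (((P.restrict s).map X).prod (P.map W)) := by
    rw [← map_prodMk_restrict_of_indep h𝒢 hW hWindep hX hs]
    exact (integrable_map_measure hf.aestronglyMeasurable hXW.aemeasurable).2 hfint.restrict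
  refine (ae_eq_condExp_of_forall_setIntegral_eq h𝒢 hfint (fun s hs _ => ?_) (fun s hs _ => ?_)
    (havg.comp_measurable hX).aestronglyMeasurable).symm
  · exact (hint_prod hs).integral_prod_left.comp_measurable hX_amb
  · calc ∫ ω in s, ∫ w, f (X ω, w) ∂(P.map W) ∂P
        = ∫ x, ∫ w, f (x, w) ∂(P.map W) ∂((P.restrict s).map X) :=
          (integral_map hX_amb.aemeasurable havg.aestronglyMeasurable).symm
      _ = ∫ p, f p ∂((P.restrict s).map fun ω => (X ω, W ω)) := by
          rw [map_prodMk_restrict_of_indep h𝒢 hW hWindep hX hs, integral_prod _ (hint_prod hs)]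
      _ = ∫ ω in s, f (X ω, W ω) ∂P :=
          integral_map hXW.aemeasurable hf.aestronglyMeasurable

theorem condExp_sub_of_bellman [CompleteSpace B] (h𝒢 : 𝒢 ≤ mΩ) (hW : Measurable W)
    (hWindep : Indep (MeasurableSpace.comap W inferInstance) 𝒢 P) (hX : Measurable[𝒢] X)
    {f : G × E → B} (hf : StronglyMeasurable f) (hfint : Integrable (fun ω => f (X ω, W ω)) P)
    {L V : G → B} (hL : StronglyMeasurable L) (hVint : Integrable (fun ω => V (X ω)) P)
    (hV : ∀ x, V x = L x + ∫ w, f (x, w) ∂(P.map W)) :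
    P[fun ω => f (X ω, W ω) - V (X ω)|𝒢] =ᵐ[P] fun ω => -L (X ω) := by
  have hVmeas : StronglyMeasurable V := by
    rw [funext hV]
    exact hL.add hf.integral_prod_right'
  have hVX : P[fun ω => V (X ω)|𝒢] = fun ω => V (X ω) :=
    condExp_of_stronglyMeasurable h𝒢 (hVmeas.comp_measurable hX) hVint
  filter_upwards [condExp_sub hfint hVint 𝒢,
    condExp_comp_prodMk_of_indep h𝒢 hW hWindep hX hf hfint] with ω hsub hfreeze
  calc (P[fun ω => f (X ω, W ω) - V (X ω)|𝒢]) ω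
      = (∫ w, f (X ω, w) ∂(P.map W)) - V (X ω) := by rw [← hfreeze, ← congrFun hVX ω]; exact hsub
    _ = -L (X ω) := by rw [hV]; abel

end Freezing

/-- A law on `ℝ^ι` that is centred and has identity covariance, as for the increment of normalized
white noise. -/
structure IsWhiteNoise {ι : Type*} [DecidableEq ι] (γ : Measure (ι → ℝ)) : Prop where
  memLp_eval : ∀ i, MemLp (fun w => w i) 2 γ
  integral_eval : ∀ i, ∫ w, w i ∂γ = 0
  integral_eval_mul_eval : ∀ i j, ∫ w, w i * w j ∂γ = (1 : Matrix ι ι ℝ) i j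

/-- The estimator of a backward difference with drift `l` built from a first-order coefficient `z`
and a second-order coefficient `M`: the second-order Taylor expansion along the noise `w`, with
`w wᵀ` recentred by its mean `1`. -/
noncomputable def taylorEstimator {ι : Type*} [Fintype ι] [DecidableEq ι] (l : ℝ) (z : ι → ℝ)
    (M : Matrix ι ι ℝ) (w : ι → ℝ) : ℝ :=
  l + z ⬝ᵥ w + (1 / 2) * trace (M * (vecMulVec w w - 1))

theorem isWhiteNoise_pi {ι : Type*} [Fintype ι] [DecidableEq ι] {μ : ι → Measure ℝ}
    [∀ i, IsProbabilityMeasure (μ i)] (hL2 : ∀ i, MemLp id 2 (μ i)) (hmean : ∀ i, ∫ x, x ∂μ i = 0)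
    (hvar : ∀ i, Var[id; μ i] = 1) : IsWhiteNoise (Measure.pi μ) := by
  have hmem (i : ι) : MemLp (fun w : ι → ℝ => w i) 2 (Measure.pi μ) :=
    (hL2 i).comp_measurePreserving (measurePreserving_eval μ i)
  have hcentred (i : ι) : ∫ w, w i ∂Measure.pi μ = 0 :=
    integral_eval.trans (hmean i)
  refine ⟨hmem, hcentred, fun i j => ?_⟩
  obtain rfl | hij := eq_or_ne i j
  · calc ∫ w, w i * w i ∂Measure.pi μ = ∫ x, x * x ∂μ i :=
          integral_comp_eval (μ := μ) (i := i) (f := fun x => x * x) (by fun_prop)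
      _ = Var[id; μ i] := by
          simp [variance_of_integral_eq_zero aemeasurable_id (hmean i), pow_two]
      _ = (1 : Matrix ι ι ℝ) i i := by rw [hvar, one_apply_eq]
  · have hindep : iIndepFun (fun (i : ι) (w : ι → ℝ) => w i) (Measure.pi μ) :=
      iIndepFun_pi (X := fun _ => id) fun _ => aemeasurable_id
    rw [(hindep.indepFun hij).integral_fun_mul_eq_mul_integral (hmem i).1 (hmem j).1, hcentred,
      zero_mul, one_apply_ne hij]

theorem isWhiteNoise_stdGaussian (n : ℕ) : IsWhiteNoise (_root_.stdGaussian n) :=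
  isWhiteNoise_pi (fun _ => memLp_id_gaussianReal 2) (fun _ => integral_id_gaussianReal)
    fun _ => variance_id_gaussianReal

namespace IsWhiteNoise

variable {ι : Type*} [DecidableEq ι] {γ : Measure (ι → ℝ)}

theorem integrable_vecMulVec_sub_one [IsFiniteMeasure γ] (hγ : IsWhiteNoise γ) (i j : ι) :
    Integrable (fun w => (vecMulVec w w - 1 : Matrix ι ι ℝ) i j) γ :=
  ((hγ.memLp_eval i).integrable_mul (hγ.memLp_eval j)).sub (integrable_const _)

theorem integral_vecMulVec_sub_one [IsProbabilityMeasure γ] (hγ : IsWhiteNoise γ) (i j : ι) :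
    ∫ w, (vecMulVec w w - 1 : Matrix ι ι ℝ) i j ∂γ = 0 := by
  have hmul : Integrable (fun w => w i * w j) γ :=
    (hγ.memLp_eval i).integrable_mul (hγ.memLp_eval j)
  calc ∫ w, (vecMulVec w w - 1 : Matrix ι ι ℝ) i j ∂γ
      = (∫ w, w i * w j ∂γ) - ∫ _, (1 : Matrix ι ι ℝ) i j ∂γ :=
        integral_sub hmul (integrable_const _)
    _ = 0 := by
        rw [hγ.integral_eval_mul_eval, integral_const, probReal_univ, one_smul, sub_self]

variable [Fintype ι]

theorem integrable_dotProduct [IsFiniteMeasure γ] (hγ : IsWhiteNoise γ) (z : ι → ℝ) :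
    Integrable (fun w => z ⬝ᵥ w) γ :=
  integrable_finsetSum _ fun i _ => ((hγ.memLp_eval i).integrable one_le_two).const_mul (z i)

theorem integral_dotProduct [IsFiniteMeasure γ] (hγ : IsWhiteNoise γ) (z : ι → ℝ) :
    ∫ w, z ⬝ᵥ w ∂γ = 0 := by
  simp only [dotProduct]
  rw [integral_finsetSum _ fun i _ => ((hγ.memLp_eval i).integrable one_le_two).const_mul (z i)]
  simp only [integral_const_mul, hγ.integral_eval, mul_zero, Finset.sum_const_zero]

theorem integrable_trace_mul_vecMulVec_sub_one [IsFiniteMeasure γ] (hγ : IsWhiteNoise γ)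
    (M : Matrix ι ι ℝ) : Integrable (fun w => trace (M * (vecMulVec w w - 1))) γ :=
  integrable_finsetSum _ fun i _ => integrable_finsetSum _ fun j _ =>
    (hγ.integrable_vecMulVec_sub_one j i).const_mul (M i j)

theorem integral_trace_mul_vecMulVec_sub_one [IsProbabilityMeasure γ] (hγ : IsWhiteNoise γ)
    (M : Matrix ι ι ℝ) : ∫ w, trace (M * (vecMulVec w w - 1)) ∂γ = 0 := by
  have hint (i j : ι) : Integrable (fun w => M i j * (vecMulVec w w - 1 : Matrix ι ι ℝ) j i) γ :=
    (hγ.integrable_vecMulVec_sub_one j i).const_mul (M i j)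
  simp only [trace, diag_apply, mul_apply]
  rw [integral_finsetSum _ fun i _ => integrable_finsetSum _ fun j _ => hint i j]
  refine Finset.sum_eq_zero fun i _ => ?_
  rw [integral_finsetSum _ fun j _ => hint i j]
  exact Finset.sum_eq_zero fun j _ => by
    rw [integral_const_mul, hγ.integral_vecMulVec_sub_one, mul_zero]

theorem integral_taylorEstimator [IsProbabilityMeasure γ] (hγ : IsWhiteNoise γ) (l : ℝ)
    (z : ι → ℝ) (M : Matrix ι ι ℝ) : ∫ w, taylorEstimator l z M w ∂γ = l := by
  have hlinear := hγ.integrable_dotProduct z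
  have hquadratic := hγ.integrable_trace_mul_vecMulVec_sub_one M
  calc ∫ w, taylorEstimator l z M w ∂γ
      = (∫ _, l ∂γ) + (∫ w, z ⬝ᵥ w ∂γ) + (1 / 2) * ∫ w, trace (M * (vecMulVec w w - 1)) ∂γ := by
        rw [← integral_add (integrable_const l) hlinear, ← integral_const_mul]
        exact integral_add ((integrable_const l).add hlinear) (hquadratic.const_mul _)
    _ = l := by
        rw [hγ.integral_dotProduct, hγ.integral_trace_mul_vecMulVec_sub_one, integral_const,
          probReal_univ, one_smul, mul_zero, add_zero, add_zero]

end IsWhiteNoise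

section Measurability

variable {α : Type*} {mα : MeasurableSpace α}

theorem measurable_matrix_mul_apply {k m n R : Type*} [Fintype m] [NonUnitalNonAssocSemiring R]
    [MeasurableSpace R] [MeasurableAdd₂ R] [MeasurableMul₂ R] {A : α → Matrix k m R}
    {B : α → Matrix m n R} (hA : ∀ i j, Measurable fun a => A a i j)
    (hB : ∀ i j, Measurable fun a => B a i j) (i : k) (j : n) :
    Measurable fun a => (A a * B a) i j := by
  simp only [mul_apply]
  exact Finset.measurable_fun_sum _ fun l _ => (hA i l).mul (hB l j)

theorem measurable_mulVec {m n R : Type*} [Fintype n] [NonUnitalNonAssocSemiring R]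
    [MeasurableSpace R] [MeasurableAdd₂ R] [MeasurableMul₂ R] {A : α → Matrix m n R}
    {v : α → n → R} (hA : ∀ i j, Measurable fun a => A a i j) (hv : Measurable v) :
    Measurable fun a => A a *ᵥ v a :=
  measurable_pi_lambda _ fun i =>
    Finset.measurable_fun_sum _ fun j _ => (hA i j).mul ((measurable_pi_apply j).comp hv)

theorem measurable_taylorEstimator {ι : Type*} [Fintype ι] [DecidableEq ι] {l : α → ℝ}
    {z w : α → ι → ℝ} {M : α → Matrix ι ι ℝ} (hl : Measurable l) (hz : Measurable z)
    (hM : ∀ i j, Measurable fun a => M a i j) (hw : Measurable w) :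
    Measurable fun a => taylorEstimator (l a) (z a) (M a) (w a) := by
  have hquadratic (i j : ι) :
      Measurable fun a => (vecMulVec (w a) (w a) - 1 : Matrix ι ι ℝ) i j := by
    simp only [Matrix.sub_apply, vecMulVec_apply]
    fun_prop
  have hlinear : Measurable fun a => z a ⬝ᵥ w a := by
    simp only [dotProduct]
    fun_prop
  exact (hl.add hlinear).add <| measurable_const.mul <|
    Finset.measurable_fun_sum _ fun i _ => measurable_matrix_mul_apply hM hquadratic i i

theorem measurable_grad {n : ℕ} (f : (Fin n → ℝ) → ℝ) : Measurable (grad f) :=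
  measurable_pi_lambda _ fun i => measurable_fderiv_apply_const ℝ f (Pi.single i 1)

theorem measurable_hess_apply {n : ℕ} (f : (Fin n → ℝ) → ℝ) (i j : Fin n) :
    Measurable fun x => hess f x i j :=
  measurable_fderiv_apply_const ℝ (fun y => fderiv ℝ f y (Pi.single j 1)) (Pi.single i 1)

theorem measurable_transpose_mulVec_grad {n : ℕ} {κ : Type*} {σ : α → Matrix (Fin n) κ ℝ}
    (hσ : ∀ i j, Measurable fun a => σ a i j) {x : α → Fin n → ℝ} (hx : Measurable x)
    (f : (Fin n → ℝ) → ℝ) : Measurable fun a => (σ a)ᵀ *ᵥ grad f (x a) :=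
  measurable_mulVec (fun i j => hσ j i) ((measurable_grad f).comp hx)

theorem measurable_transpose_mul_hess_mul_apply {n : ℕ} {κ : Type*}
    {σ : α → Matrix (Fin n) κ ℝ} (hσ : ∀ i j, Measurable fun a => σ a i j)
    {x : α → Fin n → ℝ} (hx : Measurable x) (f : (Fin n → ℝ) → ℝ) (i j : κ) :
    Measurable fun a => ((σ a)ᵀ * hess f (x a) * σ a) i j :=
  measurable_matrix_mul_apply (measurable_matrix_mul_apply (fun i j => hσ j i)
    fun i j => (measurable_hess_apply f i j).comp hx) hσ i j

end Measurability

theorem condExp_taylorEstimator {Ω ι : Type*} [Fintype ι] [DecidableEq ι]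
    {𝒢 mΩ : MeasurableSpace Ω} {P : Measure Ω} [IsProbabilityMeasure P] (h𝒢 : 𝒢 ≤ mΩ)
    {W : Ω → ι → ℝ} (hW : Measurable W)
    (hWindep : Indep (MeasurableSpace.comap W inferInstance) 𝒢 P) (hWlaw : IsWhiteNoise (P.map W))
    {l : Ω → ℝ} {z : Ω → ι → ℝ} {M : Ω → Matrix ι ι ℝ} (hl : Measurable[𝒢] l)
    (hz : Measurable[𝒢] z) (hM : ∀ i j, Measurable[𝒢] fun ω => M ω i j)
    (hint : Integrable (fun ω => taylorEstimator (l ω) (z ω) (M ω) (W ω)) P) :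
    P[fun ω => taylorEstimator (l ω) (z ω) (M ω) (W ω)|𝒢] =ᵐ[P] l := by
  have : IsProbabilityMeasure (P.map W) := Measure.isProbabilityMeasure_map hW.aemeasurable
  -- `Matrix` carries no measurable structure, so `M` enters as a function of two indices.
  let coeff : Ω → ℝ × (ι → ℝ) × (ι → ι → ℝ) := fun ω => (l ω, z ω, M ω)
  have hcoeff : Measurable[𝒢] coeff := hl.prodMk (hz.prodMk (by fun_prop))
  have hf : Measurable fun p : (ℝ × (ι → ℝ) × (ι → ι → ℝ)) × (ι → ℝ) =>
      taylorEstimator p.1.1 p.1.2.1 (Matrix.of p.1.2.2) p.2 :=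
    measurable_taylorEstimator (by fun_prop) (by fun_prop)
      (fun i j => by simp only [of_apply]; fun_prop) (by fun_prop)
  refine (condExp_comp_prodMk_of_indep h𝒢 hW hWindep hcoeff hf.stronglyMeasurable hint).trans ?_
  exact .of_forall fun ω => hWlaw.integral_taylorEstimator (l ω) (z ω) (M ω)

theorem taylor_estimator_unbiased_general {Ω G H ι : Type*} [Fintype ι] [DecidableEq ι]
    [MeasurableSpace G] [MeasurableSpace H] {𝒢 mΩ : MeasurableSpace Ω} {P : Measure Ω}
    [IsProbabilityMeasure P] (h𝒢 : 𝒢 ≤ mΩ) {W : Ω → ι → ℝ} (hW : Measurable W)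
    (hWindep : Indep (MeasurableSpace.comap W inferInstance) 𝒢 P) (hWlaw : IsWhiteNoise (P.map W))
    {X : Ω → G} (hX : Measurable[𝒢] X) {step : G × (ι → ℝ) → H} (hstep : Measurable step)
    {L V : G → ℝ} (hL : Measurable L) {V' : H → ℝ} (hV' : Measurable V')
    (hV'int : Integrable (fun ω => V' (step (X ω, W ω))) P)
    (hVint : Integrable (fun ω => V (X ω)) P)
    (hV : ∀ x, V x = L x + ∫ w, V' (step (x, w)) ∂(P.map W))
    {Z : Ω → ι → ℝ} (hZ : Measurable[𝒢] Z)
    {M : Ω → Matrix ι ι ℝ} (hM : ∀ i j, Measurable[𝒢] fun ω => M ω i j)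
    (hint : Integrable (fun ω => taylorEstimator (-L (X ω)) (Z ω) (M ω) (W ω)) P) :
    P[fun ω => taylorEstimator (-L (X ω)) (Z ω) (M ω) (W ω)|𝒢] =ᵐ[P] (fun ω => -L (X ω)) ∧
      P[fun ω => V' (step (X ω, W ω)) - V (X ω)|𝒢] =ᵐ[P] (fun ω => -L (X ω)) :=
  ⟨condExp_taylorEstimator h𝒢 hW hWindep hWlaw (hL.comp hX).neg hZ hM hint,
    condExp_sub_of_bellman h𝒢 hW hWindep hX (hV'.comp hstep).stronglyMeasurable hV'int
      hL.stronglyMeasurable hVint hV⟩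

/-- **Unbiasedness of the Taylor estimator of the backward difference.**
With the one-step Bellman setup, `E[ΔŶ | 𝒢] = E[ΔY | 𝒢] = −L(X)` almost surely. -/
theorem taylor_estimator_unbiased
    {Ω : Type*} (𝒢 : MeasurableSpace Ω) [mΩ : MeasurableSpace Ω]
    (P : Measure Ω) [IsProbabilityMeasure P]
    {n : ℕ} (h𝒢 : 𝒢 ≤ mΩ)
    -- the noise W : i.i.d. standard normal coordinates, independent of 𝒢
    (W : Ω → Fin n → ℝ) (hWmeas : Measurable W)
    (hWlaw : Measure.map W P = stdGaussian n)
    (hWindep : Indep (MeasurableSpace.comap W inferInstance) 𝒢 P)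
    -- the current state X is 𝒢-measurable; dynamics data F, Σ, L
    (X : Ω → Fin n → ℝ) (hX : Measurable[𝒢] X)
    (F : (Fin n → ℝ) → Fin n → ℝ) (hF : Measurable F)
    (S : (Fin n → ℝ) → Matrix (Fin n) (Fin n) ℝ) (hS : ∀ i j, Measurable fun x => S x i j)
    (L : (Fin n → ℝ) → ℝ) (hL : Measurable L)
    -- X̄ := X + F(X), X' := X̄ + Σ(X) W
    (Xb : Ω → Fin n → ℝ) (hXb : ∀ ω, Xb ω = X ω + F (X ω))
    (X' : Ω → Fin n → ℝ) (hX' : ∀ ω, X' ω = Xb ω + (S (X ω)).mulVec (W ω))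
    -- the next-step value function V' and the one-step Bellman value V
    (V' : (Fin n → ℝ) → ℝ) (hV'meas : Measurable V')
    (hV'int : Integrable (fun ω => V' (X' ω)) P)
    (V : (Fin n → ℝ) → ℝ)
    (hV : ∀ x, V x = L x + ∫ w, V' (x + F x + (S x).mulVec w) ∂(stdGaussian n))
    -- the C² value function approximation Ṽ and associated Ȳ, Z̄, M̄
    (Vt : (Fin n → ℝ) → ℝ) (hVt : ContDiff ℝ 2 Vt)
    (hVtint : Integrable (fun ω => Vt (X' ω)) P)
    (Zb : Ω → Fin n → ℝ) (hZb : ∀ ω, Zb ω = (S (X ω))ᵀ.mulVec (grad Vt (Xb ω)))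
    (Mb : Ω → Matrix (Fin n) (Fin n) ℝ)
    (hMb : ∀ ω, Mb ω = (S (X ω))ᵀ * hess Vt (Xb ω) * S (X ω))
    (hZbint : ∀ i, Integrable (fun ω => Zb ω i) P)
    (hMbint : ∀ i j, Integrable (fun ω => Mb ω i j) P)
    -- the true backward difference ΔY and the Taylor estimator ΔŶ
    (ΔY : Ω → ℝ) (hΔY : ∀ ω, ΔY ω = V' (X' ω) - V (X ω))
    (ΔYh : Ω → ℝ)
    (hΔYh : ∀ ω, ΔYh ω = -L (X ω) + (∑ i, Zb ω i * W ω i)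
      + (1 / 2) * Matrix.trace (Mb ω * (Matrix.vecMulVec (W ω) (W ω) - 1)))
    -- integrability of all displayed random variables
    (hΔYint : Integrable ΔY P) (hΔYhint : Integrable ΔYh P)
    (hLint : Integrable (fun ω => L (X ω)) P)
    (hVint : Integrable (fun ω => V (X ω)) P) :
    P[ΔYh|𝒢] =ᵐ[P] (fun ω => -L (X ω)) ∧ P[ΔY|𝒢] =ᵐ[P] (fun ω => -L (X ω)) := by
  obtain rfl := funext hXb
  obtain rfl := funext hX'
  obtain rfl := funext hZb
  obtain rfl := funext hMb
  obtain rfl := funext hΔY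
  obtain rfl := funext hΔYh
  have hXb_meas : Measurable[𝒢] fun ω => X ω + F (X ω) := hX.add (hF.comp hX)
  have hSX (i j : Fin n) : Measurable[𝒢] fun ω => S (X ω) i j := (hS i j).comp hX
  have hstep : Measurable fun p : (Fin n → ℝ) × (Fin n → ℝ) => p.1 + F p.1 + S p.1 *ᵥ p.2 :=
    (measurable_fst.add (hF.comp measurable_fst)).add
      (measurable_mulVec (fun i j => (hS i j).comp measurable_fst) measurable_snd)
  exact taylor_estimator_unbiased_general h𝒢 hWmeas hWindep (hWlaw ▸ isWhiteNoise_stdGaussian n)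
    hX hstep hL hV'meas hV'int hVint (hWlaw ▸ hV)
    (measurable_transpose_mulVec_grad hSX hXb_meas Vt)
    (measurable_transpose_mul_hess_mul_apply hSX hXb_meas Vt) hΔYhint
end

section
/- Let D : Ω → ℝⁿ be 𝒢-measurable and bounded, and set Θ := exp(−½‖D‖² + ⟨D, W⟩). Then E_P[Θ] = 1, so Q := P.withDensity(Θ) is a probability measure; moreover, under Q the random vector W − D has law γ (its coordinates are i.i.d. standard normal) and σ(W − D) is independent of 𝒢 under Q. -/
open MeasureTheory ProbabilityTheory

/-! Conditionally on `𝒢` the drift `D` is a constant `d`, and completing the square turns the weight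
`exp (-½‖d‖² + ⟨d, w⟩)` into the change of density from `N(0, I)` to `N(d, I)`. Hence `W - D` has,
under the weighted measure and conditionally on `𝒢`, the law `N(0, I)`; as this conditional law does
not depend on the condition, `W - D` is independent of `𝒢`. The conditioning is realised by Fubini
on `ℝⁿ × (Ω, 𝒢)`, on which the joint law of `W` and the identity is a product. -/

section Density

variable {Ω E S F : Type*} [MeasurableSpace Ω] [MeasurableSpace E] [MeasurableSpace S]
  [MeasurableSpace F]

lemma map_withDensity_comp {P : Measure Ω} {X : Ω → E} {f : E → ENNReal} (hX : Measurable X)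
    (hf : Measurable f) :
    (P.withDensity fun ω => f (X ω)).map X = (P.map X).withDensity f := by
  ext s hs
  rw [Measure.map_apply hX hs, withDensity_apply _ (hX hs), withDensity_apply _ hs,
    setLIntegral_map hs hf hX]

lemma prod_withDensity_apply {μ : Measure E} {ρ : Measure S} [SFinite μ] [SFinite ρ]
    {f : E × S → ENNReal} (hf : Measurable f) {s : Set (E × S)} (hs : MeasurableSet s) :
    (μ.prod ρ).withDensity f s =
      ∫⁻ y, μ.withDensity (fun x => f (x, y)) ((fun x => (x, y)) ⁻¹' s) ∂ρ := by
  rw [withDensity_apply _ hs, ← lintegral_indicator hs,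
    lintegral_prod_symm' _ (hf.indicator hs)]
  refine lintegral_congr fun y => ?_
  have hsection : MeasurableSet ((fun x => (x, y)) ⁻¹' s) := measurable_prodMk_right hs
  rw [withDensity_apply _ hsection, ← lintegral_indicator hsection]
  rfl

lemma map_prod_withDensity_of_ae_map_eq {μ : Measure E} {ρ : Measure S} {ν : Measure F}
    [SFinite μ] [SFinite ρ] [SFinite ν] {f : E × S → ENNReal} (hf : Measurable f)
    {g : E × S → F} (hg : Measurable g)
    (h : ∀ᵐ y ∂ρ, (μ.withDensity fun x => f (x, y)).map (fun x => g (x, y)) = ν) :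
    ((μ.prod ρ).withDensity f).map (fun p => (g p, p.2)) = ν.prod ρ := by
  ext s hs
  have hgp : Measurable fun p : E × S => (g p, p.2) := hg.prodMk measurable_snd
  rw [Measure.map_apply hgp hs, prod_withDensity_apply hf (hgp hs), Measure.prod_apply_symm hs]
  refine lintegral_congr_ae ?_
  filter_upwards [h] with y hy
  have hg_section : Measurable fun x => g (x, y) := hg.comp measurable_prodMk_right
  rw [← hy, Measure.map_apply hg_section (measurable_prodMk_right hs)]
  rfl

lemma map_prodMk_withDensity_of_indepFun {P : Measure Ω} [IsFiniteMeasure P] {ν : Measure F}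
    [SFinite ν] {X : Ω → E} {Y : Ω → S} (hX : Measurable X) (hY : Measurable Y)
    (hXY : IndepFun X Y P)
    {f : E × S → ENNReal} (hf : Measurable f) {g : E × S → F} (hg : Measurable g)
    (h : ∀ᵐ y ∂P.map Y, ((P.map X).withDensity fun x => f (x, y)).map (fun x => g (x, y)) = ν) :
    (P.withDensity fun ω => f (X ω, Y ω)).map (fun ω => (g (X ω, Y ω), Y ω)) =
      ν.prod (P.map Y) := by
  rw [← map_prod_withDensity_of_ae_map_eq hf hg h,
    ← hXY.map_prod_eq_prod_map_map hX.aemeasurable hY.aemeasurable,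
    ← map_withDensity_comp (hX.prodMk hY) hf,
    Measure.map_map (hg.prodMk measurable_snd) (hX.prodMk hY)]
  rfl

lemma integral_eq_one_of_isProbabilityMeasure_withDensity {P : Measure Ω} {f : Ω → ℝ}
    (hf : AEStronglyMeasurable f P) (hf_nonneg : 0 ≤ᵐ[P] f)
    (hprob : IsProbabilityMeasure (P.withDensity fun ω => ENNReal.ofReal (f ω))) :
    ∫ ω, f ω ∂P = 1 := by
  rw [integral_eq_lintegral_of_nonneg_ae hf_nonneg hf, ← setLIntegral_univ,
    ← withDensity_apply _ MeasurableSet.univ, hprob.measure_univ, ENNReal.toReal_one]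

end Density

section JointLaw

variable {Ω F S : Type*} [MeasurableSpace Ω] [MeasurableSpace F] {_ : MeasurableSpace S}
  {Q : Measure Ω} {ν : Measure F} {ρ : Measure S} [IsProbabilityMeasure ρ] {Z : Ω → F} {Y : Ω → S}

lemma map_eq_left_of_map_prodMk_eq_prod (hY : Measurable Y)
    (h : Q.map (fun ω => (Z ω, Y ω)) = ν.prod ρ) : Q.map Z = ν := by
  rw [← Measure.fst_map_prodMk hY, h, Measure.fst_prod]

lemma indepFun_of_map_prodMk_eq_prod [IsProbabilityMeasure ν] (hZ : Measurable Z)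
    (hY : Measurable Y) (h : Q.map (fun ω => (Z ω, Y ω)) = ν.prod ρ) : IndepFun Z Y Q := by
  have hZ_law : Q.map Z = ν := map_eq_left_of_map_prodMk_eq_prod hY h
  have hY_law : Q.map Y = ρ := by rw [← Measure.snd_map_prodMk hZ, h, Measure.snd_prod]
  refine (indepFun_iff_map_prod_eq_prod_map_map' hZ.aemeasurable hY.aemeasurable ?_ ?_).2 ?_
  · rw [hZ_law]
    infer_instance
  · rw [hY_law]
    infer_instance
  · rw [hZ_law, hY_law, h]

end JointLaw

section Product

variable {ι : Type*} [Fintype ι] {E : ι → Type*} [∀ i, MeasurableSpace (E i)]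
  {μ : ∀ i, Measure (E i)} [∀ i, IsProbabilityMeasure (μ i)] {f : ∀ i, E i → ENNReal}

lemma lintegral_pi_prod_eq_prod_lintegral (hf : ∀ i, Measurable (f i)) :
    ∫⁻ x, ∏ i, f i (x i) ∂Measure.pi μ = ∏ i, ∫⁻ x, f i x ∂μ i := by
  rw [lintegral_prod_eq_prod_lintegral_of_indepFun Finset.univ _
    (iIndepFun_pi fun i => (hf i).aemeasurable) fun i => (hf i).comp (measurable_pi_apply i)]
  exact Finset.prod_congr rfl fun i _ => (measurePreserving_eval μ i).lintegral_comp (hf i)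

lemma pi_withDensity (hf : ∀ i, Measurable (f i)) [∀ i, SigmaFinite ((μ i).withDensity (f i))] :
    (Measure.pi μ).withDensity (fun x => ∏ i, f i (x i)) =
      Measure.pi fun i => (μ i).withDensity (f i) := by
  classical
  refine (Measure.pi_eq fun s hs => ?_).symm
  have indicator_pi (x : ∀ i, E i) : (Set.univ.pi s).indicator (fun x => ∏ i, f i (x i)) x =
      ∏ i, (s i).indicator (f i) (x i) := by
    simp only [Set.indicator_apply, Finset.prod_ite_zero, Set.mem_univ_pi, Finset.mem_univ,
      forall_const]
  rw [withDensity_apply _ (MeasurableSet.univ_pi hs),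
    ← lintegral_indicator (MeasurableSet.univ_pi hs)]
  simp only [indicator_pi]
  rw [lintegral_pi_prod_eq_prod_lintegral fun i => (hf i).indicator (hs i)]
  exact Finset.prod_congr rfl fun i _ => by
    rw [lintegral_indicator (hs i), withDensity_apply _ (hs i)]

end Product

section Gaussian

open scoped NNReal

-- `m * t + v * t ^ 2 / 2` is the cumulant generating function of `gaussianReal m v` at `t`.
lemma gaussianReal_withDensity_exp (m t : ℝ) (v : ℝ≥0) :
    (gaussianReal m v).withDensity
        (fun x => ENNReal.ofReal (Real.exp (t * x - (m * t + v * t ^ 2 / 2)))) =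
      gaussianReal (m + v * t) v := by
  obtain rfl | hv := eq_or_ne v 0
  · simp [gaussianReal_zero_var, dirac_withDensity, mul_comm t m]
  rw [gaussianReal_of_var_ne_zero m hv, gaussianReal_of_var_ne_zero (m + v * t) hv,
    ← withDensity_mul _ (measurable_gaussianPDF m v) (by fun_prop)]
  congr 1
  ext x
  have hv' : (v : ℝ) ≠ 0 := by exact_mod_cast hv
  have complete_square : -(x - m) ^ 2 / (2 * v) + (t * x - (m * t + v * t ^ 2 / 2)) =
      -(x - (m + v * t)) ^ 2 / (2 * v) := by
    field_simp
    ring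
  rw [Pi.mul_apply, gaussianPDF, gaussianPDF, ← ENNReal.ofReal_mul (gaussianPDFReal_nonneg _ _ _),
    gaussianPDFReal, gaussianPDFReal, mul_assoc, ← Real.exp_add, complete_square]

variable {ι : Type*} [Fintype ι]

/-- The Girsanov weight `exp (-½‖d‖² + ⟨d, w⟩)`, the density of `N(d, I)` with respect to `N(0, I)`
at the point `w`. It is written in coordinates because `ι → ℝ` carries the supremum norm. -/
noncomputable def girsanovDensity (d w : ι → ℝ) : ℝ :=
  Real.exp (-(1 / 2) * (∑ i, d i ^ 2) + ∑ i, d i * w i)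

lemma girsanovDensity_pos (d w : ι → ℝ) : 0 < girsanovDensity d w := Real.exp_pos _

lemma girsanovDensity_eq_prod (d w : ι → ℝ) :
    girsanovDensity d w = ∏ i, Real.exp (d i * w i - d i ^ 2 / 2) := by
  rw [girsanovDensity, ← Real.exp_sum, Finset.sum_sub_distrib, ← Finset.sum_div]
  ring_nf

lemma measurable_girsanovDensity {α : Type*} [MeasurableSpace α] {d w : α → ι → ℝ}
    (hd : Measurable d) (hw : Measurable w) :
    Measurable fun a => girsanovDensity (d a) (w a) := by
  unfold girsanovDensity
  fun_prop

lemma pi_gaussianReal_withDensity_girsanovDensity (d : ι → ℝ) :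
    (Measure.pi fun _ => gaussianReal 0 1).withDensity
        (fun w => ENNReal.ofReal (girsanovDensity d w)) =
      Measure.pi fun i => gaussianReal (d i) 1 := by
  have tilt (i : ι) : (gaussianReal 0 1).withDensity
      (fun x => ENNReal.ofReal (Real.exp (d i * x - d i ^ 2 / 2))) = gaussianReal (d i) 1 := by
    simpa using gaussianReal_withDensity_exp 0 (d i) 1
  have (i : ι) : SigmaFinite ((gaussianReal 0 1).withDensity
      fun x => ENNReal.ofReal (Real.exp (d i * x - d i ^ 2 / 2))) := by
    rw [tilt]
    infer_instance
  simp only [girsanovDensity_eq_prod,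
    ENNReal.ofReal_prod_of_nonneg fun _ _ => (Real.exp_pos _).le]
  rw [pi_withDensity (f := fun i x => ENNReal.ofReal (Real.exp (d i * x - d i ^ 2 / 2)))
    fun i => by fun_prop]
  simp only [tilt]

lemma map_sub_const_pi_gaussianReal (m d : ι → ℝ) (v : ι → ℝ≥0) :
    (Measure.pi fun i => gaussianReal (m i) (v i)).map (fun w => w - d) =
      Measure.pi fun i => gaussianReal (m i - d i) (v i) := by
  simp only [← gaussianReal_map_sub_const]
  exact Measure.pi_map_pi fun i => (measurable_id.sub_const (d i)).aemeasurable

lemma map_sub_prodMk_withDensity_girsanovDensity {Ω S : Type*} [MeasurableSpace Ω]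
    {_ : MeasurableSpace S} {P : Measure Ω} [IsFiniteMeasure P] {W : Ω → ι → ℝ} {Y : Ω → S}
    (hW : Measurable W) (hY : Measurable Y)
    (hW_law : P.map W = Measure.pi fun _ => gaussianReal 0 1) (hWY : IndepFun W Y P)
    {d : S → ι → ℝ} (hd : Measurable d) :
    (P.withDensity fun ω => ENNReal.ofReal (girsanovDensity (d (Y ω)) (W ω))).map
        (fun ω => (W ω - d (Y ω), Y ω)) =
      (Measure.pi fun _ => gaussianReal 0 1).prod (P.map Y) := by
  have hdY : Measurable fun p : (ι → ℝ) × S => d p.2 := hd.comp measurable_snd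
  refine map_prodMk_withDensity_of_indepFun hW hY hWY
    (f := fun p => ENNReal.ofReal (girsanovDensity (d p.2) p.1)) (g := fun p => p.1 - d p.2)
    (measurable_girsanovDensity hdY measurable_fst).ennreal_ofReal
    (measurable_fst.sub hdY) (Filter.Eventually.of_forall fun y => ?_)
  simp only [hW_law, pi_gaussianReal_withDensity_girsanovDensity, map_sub_const_pi_gaussianReal,
    sub_self]

lemma girsanov_of_indep_comap {Ω S : Type*} [MeasurableSpace Ω] {mS : MeasurableSpace S}
    {P : Measure Ω} [IsProbabilityMeasure P] {W : Ω → ι → ℝ} {Y : Ω → S} (hW : Measurable W)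
    (hY : Measurable Y) (hW_law : P.map W = Measure.pi fun _ => gaussianReal 0 1)
    (hWY : Indep (MeasurableSpace.comap W inferInstance) (mS.comap Y) P)
    {d : S → ι → ℝ} (hd : Measurable d) :
    (P.withDensity fun ω => ENNReal.ofReal (girsanovDensity (d (Y ω)) (W ω))).map
        (fun ω => W ω - d (Y ω)) = (Measure.pi fun _ => gaussianReal 0 1) ∧
      Indep (MeasurableSpace.comap (fun ω => W ω - d (Y ω)) inferInstance) (mS.comap Y)
        (P.withDensity fun ω => ENNReal.ofReal (girsanovDensity (d (Y ω)) (W ω))) := by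
  rw [← IndepFun_iff_Indep] at hWY ⊢
  have joint_law := map_sub_prodMk_withDensity_girsanovDensity hW hY hW_law hWY hd
  have : IsProbabilityMeasure (P.map Y) := Measure.isProbabilityMeasure_map hY.aemeasurable
  exact ⟨map_eq_left_of_map_prodMk_eq_prod hY joint_law,
    indepFun_of_map_prodMk_eq_prod (hW.sub (hd.comp hY)) hY joint_law⟩

theorem single_step_discrete_girsanov_general
    {Ω : Type*} (𝒢 : MeasurableSpace Ω) [mΩ : MeasurableSpace Ω]
    (P : Measure Ω) [IsProbabilityMeasure P] (h𝒢 : 𝒢 ≤ mΩ)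
    (W : Ω → ι → ℝ) (hWmeas : Measurable W)
    (hWlaw : Measure.map W P = Measure.pi fun _ => gaussianReal 0 1)
    (hWindep : Indep (MeasurableSpace.comap W inferInstance) 𝒢 P)
    (D : Ω → ι → ℝ) (hDmeas : Measurable[𝒢] D)
    (Θ : Ω → ℝ)
    (hΘ : ∀ ω, Θ ω = Real.exp (-(1 / 2) * (∑ i, (D ω i) ^ 2) + ∑ i, D ω i * W ω i))
    (Q : Measure Ω) (hQ : Q = P.withDensity fun ω => ENNReal.ofReal (Θ ω)) :
    (∫ ω, Θ ω ∂P = 1) ∧ IsProbabilityMeasure Q ∧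
      Measure.map (fun ω => W ω - D ω) Q = (Measure.pi fun _ => gaussianReal 0 1) ∧
      Indep (MeasurableSpace.comap (fun ω => W ω - D ω) inferInstance) 𝒢 Q := by
  obtain rfl : Θ = fun ω => girsanovDensity (D ω) (W ω) := funext hΘ
  have hid : Measurable[mΩ, 𝒢] id := measurable_id'' h𝒢
  have hD : Measurable D := hDmeas.mono h𝒢 le_rfl
  obtain ⟨hlaw, hindep⟩ := girsanov_of_indep_comap hWmeas hid hWlaw
    (by rwa [MeasurableSpace.comap_id]) hDmeas
  rw [MeasurableSpace.comap_id] at hindep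
  simp only [id_eq, ← hQ] at hlaw hindep
  have hprob : IsProbabilityMeasure Q := by
    have : IsProbabilityMeasure (Q.map fun ω => W ω - D ω) := by
      rw [hlaw]
      infer_instance
    exact Measure.isProbabilityMeasure_of_map fun ω => W ω - D ω
  have hintegral : ∫ ω, girsanovDensity (D ω) (W ω) ∂P = 1 :=
    integral_eq_one_of_isProbabilityMeasure_withDensity
      (measurable_girsanovDensity hD hWmeas).aestronglyMeasurable
      (Filter.Eventually.of_forall fun ω => (girsanovDensity_pos _ _).le) (hQ ▸ hprob)
  exact ⟨hintegral, hprob, hlaw, hindep⟩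

end Gaussian

/-- **Single-step discrete-time Girsanov theorem.**
Let `W : Ω → ℝⁿ` have i.i.d. standard normal coordinates with `σ(W)` independent of the
sub-σ-algebra `𝒢`, let `D` be `𝒢`-measurable and bounded, and set
`Θ := exp(−½‖D‖² + ⟨D, W⟩)`.  Then `E_P[Θ] = 1`, so `Q := P.withDensity Θ` is a probability
measure; moreover under `Q` the random vector `W − D` has i.i.d. standard normal coordinates
and `σ(W − D)` is independent of `𝒢` under `Q`. -/
theorem single_step_discrete_girsanov
    {Ω : Type*} (𝒢 : MeasurableSpace Ω) [mΩ : MeasurableSpace Ω]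
    (P : Measure Ω) [IsProbabilityMeasure P]
    {n : ℕ} (h𝒢 : 𝒢 ≤ mΩ)
    (W : Ω → Fin n → ℝ) (hWmeas : Measurable W)
    (hWlaw : Measure.map W P = stdGaussian n)
    (hWindep : Indep (MeasurableSpace.comap W inferInstance) 𝒢 P)
    (D : Ω → Fin n → ℝ) (hDmeas : Measurable[𝒢] D)
    (hDbound : ∃ C, ∀ ω i, |D ω i| ≤ C)
    (Θ : Ω → ℝ)
    (hΘ : ∀ ω, Θ ω = Real.exp (-(1 / 2) * (∑ i, (D ω i) ^ 2) + ∑ i, D ω i * W ω i))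
    (Q : Measure Ω) (hQ : Q = P.withDensity fun ω => ENNReal.ofReal (Θ ω)) :
    (∫ ω, Θ ω ∂P = 1) ∧ IsProbabilityMeasure Q ∧
      Measure.map (fun ω => W ω - D ω) Q = stdGaussian n ∧
      Indep (MeasurableSpace.comap (fun ω => W ω - D ω) inferInstance) 𝒢 Q :=
  single_step_discrete_girsanov_general 𝒢 P h𝒢 W hWmeas hWlaw hWindep D hDmeas Θ hΘ Q hQ
end

section
/- Let D : Ω → ℝⁿ be 𝒢-measurable and bounded. Then E[exp(⟨D, W⟩) | 𝒢] = exp(½‖D‖²) almost surely; equivalently, E[exp(−½‖D‖² + ⟨D, W⟩) | 𝒢] = 1 almost surely. -/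
open MeasureTheory ProbabilityTheory

/-
Conditioning on `𝒢` freezes the `𝒢`-measurable vector `D`, while the independent vector `W` is
integrated against its own law; so the conditional expectation of `exp ⟨D, W⟩` is the Gaussian
moment generating function evaluated at `D`. A `𝒢`-measurable weight is frozen along with `D`, and
the weight `exp (-½ ‖D‖²)` makes the product integrable however large `D` is.
-/

section Freezing

variable {Ω α β E : Type*} {𝒢 mΩ : MeasurableSpace Ω} {mα : MeasurableSpace α}
  {mβ : MeasurableSpace β} {P : Measure Ω} [IsFiniteMeasure P] {X : Ω → α} {W : Ω → β}
  [NormedAddCommGroup E] {f : α × β → E}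

lemma map_restrict_prodMk_of_indep (h𝒢 : 𝒢 ≤ mΩ) (hX : Measurable[𝒢] X) (hW : AEMeasurable W P)
    (hind : Indep (mβ.comap W) 𝒢 P) {s : Set Ω} (hs : MeasurableSet[𝒢] s) :
    (P.restrict s).map (fun ω => (X ω, W ω)) = ((P.restrict s).map X).prod (P.map W) := by
  have hXm : Measurable X := hX.mono h𝒢 le_rfl
  refine (Measure.prod_eq fun A B hA hB => ?_).symm
  have hXA : MeasurableSet[𝒢] (X ⁻¹' A ∩ s) := (hX hA).inter hs
  rw [Measure.map_apply_of_aemeasurable (hXm.aemeasurable.prodMk hW.restrict) (hA.prod hB),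
    Measure.map_apply hXm hA, Measure.map_apply_of_aemeasurable hW hB,
    Measure.restrict_apply' (h𝒢 s hs), Measure.restrict_apply' (h𝒢 s hs), Set.mk_preimage_prod,
    Set.inter_comm (X ⁻¹' A), Set.inter_assoc,
    (Indep_iff _ _ _).1 hind _ _ ⟨B, hB, rfl⟩ hXA, mul_comm]

lemma integrable_prodMk_iff_of_indepFun (hX : Measurable X) (hW : AEMeasurable W P)
    (hind : IndepFun X W P) (hf : StronglyMeasurable f) :
    Integrable (fun ω => f (X ω, W ω)) P ↔
      (∀ᵐ ω ∂P, Integrable (fun w => f (X ω, w)) (P.map W)) ∧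
        Integrable (fun ω => ∫ w, ‖f (X ω, w)‖ ∂(P.map W)) P := by
  have hlaw := (indepFun_iff_map_prod_eq_prod_map_map hX.aemeasurable hW).1 hind
  have hnorm : StronglyMeasurable fun x => ∫ w, ‖f (x, w)‖ ∂(P.map W) :=
    hf.norm.integral_prod_right'
  calc Integrable (fun ω => f (X ω, W ω)) P
    _ ↔ Integrable f ((P.map X).prod (P.map W)) := by
      rw [← hlaw, integrable_map_measure hf.aestronglyMeasurable (hX.aemeasurable.prodMk hW)]
      rfl
    _ ↔ _ := by
      rw [integrable_prod_iff hf.aestronglyMeasurable]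
      exact and_congr (ae_map_iff hX.aemeasurable (measurableSet_integrable hf))
        (integrable_map_measure hnorm.aestronglyMeasurable hX.aemeasurable)

theorem condExp_prodMk_of_indep [NormedSpace ℝ E] [CompleteSpace E] (h𝒢 : 𝒢 ≤ mΩ)
    (hX : Measurable[𝒢] X) (hW : AEMeasurable W P) (hind : Indep (mβ.comap W) 𝒢 P)
    (hf : StronglyMeasurable f) (hint : Integrable (fun ω => f (X ω, W ω)) P) :
    P[fun ω => f (X ω, W ω)|𝒢] =ᵐ[P] fun ω => ∫ w, f (X ω, w) ∂(P.map W) := by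
  have hXm : Measurable X := hX.mono h𝒢 le_rfl
  have hfrozen : StronglyMeasurable fun x => ∫ w, f (x, w) ∂(P.map W) := hf.integral_prod_right'
  have hint_prod {s : Set Ω} (hs : MeasurableSet[𝒢] s) :
      Integrable f (((P.restrict s).map X).prod (P.map W)) := by
    rw [← map_restrict_prodMk_of_indep h𝒢 hX hW hind hs, integrable_map_measure
      hf.aestronglyMeasurable (hXm.aemeasurable.prodMk hW.restrict)]
    exact hint.restrict
  refine (ae_eq_condExp_of_forall_setIntegral_eq h𝒢 hint (fun s hs _ => ?_) (fun s hs _ => ?_)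
    (hfrozen.comp_measurable hX).aestronglyMeasurable).symm
  · exact (hint_prod hs).integral_prod_left.comp_measurable hXm
  · calc ∫ ω in s, ∫ w, f (X ω, w) ∂(P.map W) ∂P
      _ = ∫ x, ∫ w, f (x, w) ∂(P.map W) ∂((P.restrict s).map X) :=
        (integral_map hXm.aemeasurable hfrozen.aestronglyMeasurable).symm
      _ = ∫ p, f p ∂(P.restrict s).map (fun ω => (X ω, W ω)) := by
        rw [map_restrict_prodMk_of_indep h𝒢 hX hW hind hs, integral_prod _ (hint_prod hs)]
      _ = ∫ ω in s, f (X ω, W ω) ∂P :=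
        integral_map (hXm.aemeasurable.prodMk hW.restrict) hf.aestronglyMeasurable

end Freezing

section ProductMeasure

variable {ι : Type*} [Fintype ι]

lemma integrable_exp_sum_mul_pi {ν : ι → Measure ℝ} [∀ i, SigmaFinite (ν i)] {d : ι → ℝ}
    (hd : ∀ i, Integrable (fun x => Real.exp (d i * x)) (ν i)) :
    Integrable (fun w => Real.exp (∑ i, d i * w i)) (Measure.pi ν) := by
  simp_rw [Real.exp_sum]
  exact Integrable.fintype_prod hd

lemma integral_exp_sum_mul_pi (ν : ι → Measure ℝ) [∀ i, SigmaFinite (ν i)] (d : ι → ℝ) :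
    ∫ w, Real.exp (∑ i, d i * w i) ∂(Measure.pi ν) = ∏ i, mgf id (ν i) (d i) := by
  simp_rw [Real.exp_sum]
  exact integral_fintype_prod_eq_prod fun i x => Real.exp (d i * x)

lemma integral_exp_sum_mul_pi_gaussianReal (μ : ι → ℝ) (v : ι → NNReal) (d : ι → ℝ) :
    ∫ w, Real.exp (∑ i, d i * w i) ∂(Measure.pi fun i => gaussianReal (μ i) (v i)) =
      Real.exp (∑ i, (μ i * d i + v i * d i ^ 2 / 2)) := by
  rw [integral_exp_sum_mul_pi, Real.exp_sum]
  simp only [mgf_id_gaussianReal]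

lemma integral_exp_sum_mul_pi_gaussianReal_zero_one (d : ι → ℝ) :
    ∫ w, Real.exp (∑ i, d i * w i) ∂(Measure.pi fun _ => gaussianReal 0 1) =
      Real.exp ((1 / 2) * ∑ i, d i ^ 2) := by
  rw [integral_exp_sum_mul_pi_gaussianReal, Finset.mul_sum]
  congr! 2 with i
  push_cast
  ring

end ProductMeasure

section Gaussian

variable {Ω ι : Type*} [Fintype ι] {𝒢 mΩ : MeasurableSpace Ω} {P : Measure Ω} [IsFiniteMeasure P]
  {W D : Ω → ι → ℝ} {c : Ω → ℝ}

lemma integrable_mul_exp_sum_mul_gaussianReal (hD : Measurable D) (hc : Measurable c)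
    (hW : HasLaw W (Measure.pi fun _ => gaussianReal 0 1) P)
    (hind : IndepFun (fun ω => (c ω, D ω)) W P)
    (hint : Integrable (fun ω => c ω * Real.exp ((1 / 2) * ∑ i, D ω i ^ 2)) P) :
    Integrable (fun ω => c ω * Real.exp (∑ i, D ω i * W ω i)) P := by
  refine (integrable_prodMk_iff_of_indepFun
    (f := fun p : (ℝ × (ι → ℝ)) × (ι → ℝ) => p.1.1 * Real.exp (∑ i, p.1.2 i * p.2 i))
    (hc.prodMk hD) hW.aemeasurable hind (by fun_prop)).2 ⟨.of_forall fun ω => ?_, ?_⟩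
  · rw [hW.map_eq]
    exact (integrable_exp_sum_mul_pi fun i => integrable_exp_mul_gaussianReal (D ω i)).const_mul _
  · simpa only [hW.map_eq, norm_mul, Real.norm_eq_abs, Real.abs_exp, integral_const_mul,
      integral_exp_sum_mul_pi_gaussianReal_zero_one] using hint.norm

theorem condExp_mul_exp_sum_mul_gaussianReal (h𝒢 : 𝒢 ≤ mΩ) (hD : Measurable[𝒢] D)
    (hc : Measurable[𝒢] c) (hW : HasLaw W (Measure.pi fun _ => gaussianReal 0 1) P)
    (hind : Indep (MeasurableSpace.comap W inferInstance) 𝒢 P)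
    (hint : Integrable (fun ω => c ω * Real.exp ((1 / 2) * ∑ i, D ω i ^ 2)) P) :
    P[fun ω => c ω * Real.exp (∑ i, D ω i * W ω i)|𝒢] =ᵐ[P]
      fun ω => c ω * Real.exp ((1 / 2) * ∑ i, D ω i ^ 2) := by
  have hcD : Measurable[𝒢] fun ω => (c ω, D ω) := hc.prodMk hD
  have hindFun : IndepFun (fun ω => (c ω, D ω)) W P :=
    (IndepFun_iff_Indep _ _ _).2 (indep_of_indep_of_le_left hind.symm hcD.comap_le)
  have hfreeze := condExp_prodMk_of_indep
    (f := fun p : (ℝ × (ι → ℝ)) × (ι → ℝ) => p.1.1 * Real.exp (∑ i, p.1.2 i * p.2 i))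
    h𝒢 hcD hW.aemeasurable hind (by fun_prop)
    (integrable_mul_exp_sum_mul_gaussianReal (hD.mono h𝒢 le_rfl) (hc.mono h𝒢 le_rfl) hW hindFun
      hint)
  simpa only [hW.map_eq, integral_const_mul, integral_exp_sum_mul_pi_gaussianReal_zero_one]
    using hfreeze

lemma integrable_exp_mul_sum_sq_of_abs_le (hD : Measurable D) (a : ℝ)
    {C : ℝ} (hC : ∀ ω i, |D ω i| ≤ C) :
    Integrable (fun ω => Real.exp (a * ∑ i, D ω i ^ 2)) P := by
  refine .of_bound (by fun_prop) (Real.exp (|a| * ∑ _i : ι, C ^ 2)) (.of_forall fun ω => ?_)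
  rw [Real.norm_eq_abs, Real.abs_exp]
  gcongr Real.exp (?_ * ∑ i, ?_) with i
  · exact le_abs_self a
  · exact sq_le_sq.2 ((hC ω i).trans (le_abs_self C))

theorem condexp_gaussian_mgf_general (h𝒢 : 𝒢 ≤ mΩ)
    (hW : HasLaw W (Measure.pi fun _ => gaussianReal 0 1) P)
    (hind : Indep (MeasurableSpace.comap W inferInstance) 𝒢 P) (hD : Measurable[𝒢] D) :
    (Integrable (fun ω => Real.exp ((1 / 2) * ∑ i, D ω i ^ 2)) P →
      P[fun ω => Real.exp (∑ i, D ω i * W ω i)|𝒢]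
        =ᵐ[P] fun ω => Real.exp ((1 / 2) * ∑ i, D ω i ^ 2)) ∧
      P[fun ω => Real.exp (-(1 / 2) * (∑ i, D ω i ^ 2) + ∑ i, D ω i * W ω i)|𝒢]
        =ᵐ[P] fun _ => 1 := by
  constructor
  · intro hint
    simpa only [one_mul] using condExp_mul_exp_sum_mul_gaussianReal (c := fun _ => 1) h𝒢 hD
      measurable_const hW hind (by simpa only [one_mul] using hint)
  · have hweight : Measurable[𝒢] fun ω => Real.exp (-(1 / 2) * ∑ i, D ω i ^ 2) :=
      (show Measurable fun d : ι → ℝ => Real.exp (-(1 / 2) * ∑ i, d i ^ 2) by fun_prop).comp hD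
    have hcancel (ω : Ω) : Real.exp (-(1 / 2) * ∑ i, D ω i ^ 2) *
        Real.exp ((1 / 2) * ∑ i, D ω i ^ 2) = 1 := by
      rw [← Real.exp_add, neg_mul, neg_add_cancel, Real.exp_zero]
    simpa only [Real.exp_add, hcancel] using condExp_mul_exp_sum_mul_gaussianReal h𝒢 hD hweight
      hW hind (by simpa only [hcancel] using integrable_const 1)

end Gaussian

/-- **Conditional Gaussian moment-generating-function identity.**
If `W : Ω → ℝⁿ` has i.i.d. standard normal coordinates with `σ(W)` independent of the
sub-σ-algebra `𝒢`, and `D` is `𝒢`-measurable and bounded, then almost surely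
`E[exp⟨D,W⟩ | 𝒢] = exp(½‖D‖²)`; equivalently `E[exp(−½‖D‖² + ⟨D,W⟩) | 𝒢] = 1`. -/
theorem condexp_gaussian_mgf
    {Ω : Type*} (𝒢 : MeasurableSpace Ω) [mΩ : MeasurableSpace Ω]
    (P : Measure Ω) [IsProbabilityMeasure P]
    {n : ℕ} (h𝒢 : 𝒢 ≤ mΩ)
    (W : Ω → Fin n → ℝ) (hWmeas : Measurable W)
    (hWlaw : Measure.map W P = stdGaussian n)
    (hWindep : Indep (MeasurableSpace.comap W inferInstance) 𝒢 P)
    (D : Ω → Fin n → ℝ) (hDmeas : Measurable[𝒢] D)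
    (hDbound : ∃ C, ∀ ω i, |D ω i| ≤ C) :
    P[fun ω => Real.exp (∑ i, D ω i * W ω i)|𝒢]
        =ᵐ[P] (fun ω => Real.exp ((1 / 2) * ∑ i, (D ω i) ^ 2)) ∧
      P[fun ω => Real.exp (-(1 / 2) * (∑ i, (D ω i) ^ 2) + ∑ i, D ω i * W ω i)|𝒢]
        =ᵐ[P] (fun _ => 1) := by
  obtain ⟨C, hC⟩ := hDbound
  have hgen := condexp_gaussian_mgf_general h𝒢 ⟨hWmeas.aemeasurable, hWlaw⟩ hWindep hDmeas
  exact ⟨hgen.1 (integrable_exp_mul_sum_sq_of_abs_le (hDmeas.mono h𝒢 le_rfl) _ hC), hgen.2⟩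
end

section
/- Let D : Ω → ℝⁿ be 𝒢-measurable and bounded, set Θ := exp(−½‖D‖² + ⟨D, W⟩) and Q := P.withDensity(Θ), and let δ : Ω → ℝ be a random variable with δ² P-integrable. Then, almost surely, |E_Q[δ | 𝒢]| ≤ exp(½‖D‖²) · (E_P[δ² | 𝒢])^{1/2}. -/
open MeasureTheory ProbabilityTheory

/-!
Dividing `Θ = exp (-½‖D‖² + ⟨D, W⟩)` by `exp (½‖D‖²)` gives a variable `X` whose square is the
density of the same form with drift `2D`. Such densities have `𝒢`-conditional mean `1`, by freezing
the `𝒢`-measurable drift and integrating over the Gaussian law of `W`. Hence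
`E_Q[δ | 𝒢] = E_P[Θ δ | 𝒢] = exp (½‖D‖²) E_P[X δ | 𝒢]` by Bayes' formula, and since
`E_P[X² | 𝒢] = 1` the conditional Cauchy–Schwarz inequality bounds `E_P[X δ | 𝒢]` by
`E_P[δ² | 𝒢]^(1/2)`.
-/

section CondExp

variable {Ω : Type*} {m mΩ : MeasurableSpace Ω} {μ : Measure Ω}

lemma ae_nonneg_condExp_quadratic {f g : Ω → ℝ} (hf : MemLp f 2 μ) (hg : MemLp g 2 μ) (t : ℝ) :
    ∀ᵐ ω ∂μ, 0 ≤ (μ[f ^ 2 | m]) ω * (t * t) + 2 * (μ[f * g | m]) ω * t + (μ[g ^ 2 | m]) ω := by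
  have hff : Integrable ((t * t) • f ^ 2) μ := hf.integrable_sq.smul (t * t)
  have hfg : Integrable ((2 * t) • (f * g)) μ := (hf.integrable_mul hg).smul (2 * t)
  have hgg : Integrable (g ^ 2) μ := hg.integrable_sq
  have hsq : (t • f + g) ^ 2 = (t * t) • f ^ 2 + (2 * t) • (f * g) + g ^ 2 := by
    ext ω
    simp only [Pi.add_apply, Pi.smul_apply, Pi.pow_apply, Pi.mul_apply, smul_eq_mul]
    ring
  have hnonneg : 0 ≤ᵐ[μ] μ[(t • f + g) ^ 2 | m] :=
    condExp_nonneg (ae_of_all _ fun ω => sq_nonneg _)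
  rw [hsq] at hnonneg
  filter_upwards [hnonneg, condExp_add (hff.add hfg) hgg m, condExp_add hff hfg m,
    condExp_smul (μ := μ) (t * t) (f ^ 2) m, condExp_smul (μ := μ) (2 * t) (f * g) m]
    with ω h0 h1 h2 h3 h4
  simp only [Pi.zero_apply, Pi.add_apply, Pi.smul_apply, smul_eq_mul] at h0 h1 h2 h3 h4
  linarith

theorem sq_condExp_mul_le {f g : Ω → ℝ} (hf : MemLp f 2 μ) (hg : MemLp g 2 μ) :
    ∀ᵐ ω ∂μ, (μ[f * g | m]) ω ^ 2 ≤ (μ[f ^ 2 | m]) ω * (μ[g ^ 2 | m]) ω := by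
  -- Rational `t` suffice by continuity, so that only countably many null sets are discarded.
  have hrat : ∀ᵐ ω ∂μ, ∀ t : ℚ,
      0 ≤ (μ[f ^ 2 | m]) ω * ((t : ℝ) * t) + 2 * (μ[f * g | m]) ω * t + (μ[g ^ 2 | m]) ω :=
    ae_all_iff.2 fun t => ae_nonneg_condExp_quadratic hf hg t
  filter_upwards [hrat] with ω hω
  have hreal (t : ℝ) :
      0 ≤ (μ[f ^ 2 | m]) ω * (t * t) + 2 * (μ[f * g | m]) ω * t + (μ[g ^ 2 | m]) ω :=
    Rat.denseRange_cast.induction_on t (isClosed_le (by fun_prop) (by fun_prop)) hω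
  have hdiscrim := discrim_le_zero hreal
  rw [discrim] at hdiscrim
  linarith

theorem abs_condExp_mul_le_sqrt_mul_sqrt {f g : Ω → ℝ} (hf : MemLp f 2 μ) (hg : MemLp g 2 μ) :
    ∀ᵐ ω ∂μ, |(μ[f * g | m]) ω| ≤ √((μ[f ^ 2 | m]) ω) * √((μ[g ^ 2 | m]) ω) := by
  have hnonneg : 0 ≤ᵐ[μ] μ[f ^ 2 | m] := condExp_nonneg (ae_of_all _ fun ω => sq_nonneg _)
  filter_upwards [sq_condExp_mul_le (m := m) hf hg, hnonneg] with ω hω hf_nonneg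
  rw [← Real.sqrt_mul hf_nonneg]
  exact Real.abs_le_sqrt hω

section WithDensity

variable {E : Type*} [NormedAddCommGroup E] [NormedSpace ℝ E] {θ : Ω → ℝ} {f : Ω → E}

lemma integrable_withDensity_ofReal_iff (hθ : AEMeasurable θ μ) (hθ_nonneg : 0 ≤ᵐ[μ] θ) :
    Integrable f (μ.withDensity fun ω => ENNReal.ofReal (θ ω)) ↔ Integrable (θ • f) μ := by
  rw [integrable_withDensity_iff_integrable_smul₀' hθ.ennreal_ofReal (by simp)]
  refine integrable_congr ?_
  filter_upwards [hθ_nonneg] with ω hω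
  simp [ENNReal.toReal_ofReal hω]

lemma setIntegral_withDensity_ofReal (hθ : AEMeasurable θ μ) (hθ_nonneg : 0 ≤ᵐ[μ] θ) {s : Set Ω}
    (hs : MeasurableSet s) :
    ∫ ω in s, f ω ∂(μ.withDensity fun ω => ENNReal.ofReal (θ ω)) = ∫ ω in s, (θ • f) ω ∂μ := by
  rw [setIntegral_withDensity_eq_setIntegral_toReal_smul₀ hθ.ennreal_ofReal.restrict (by simp) _ hs]
  refine setIntegral_congr_ae hs ?_
  filter_upwards [hθ_nonneg] with ω hω _
  simp [ENNReal.toReal_ofReal hω]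

theorem condExp_smul_condExp_withDensity [CompleteSpace E] (hm : m ≤ mΩ) [SigmaFinite (μ.trim hm)]
    (hθ : Integrable θ μ) (hθ_nonneg : 0 ≤ᵐ[μ] θ)
    (hf : Integrable f (μ.withDensity fun ω => ENNReal.ofReal (θ ω))) :
    μ[θ | m] • (μ.withDensity fun ω => ENNReal.ofReal (θ ω))[f | m] =ᵐ[μ] μ[θ • f | m] := by
  set ν := μ.withDensity fun ω => ENNReal.ofReal (θ ω)
  have : IsFiniteMeasure ν := isFiniteMeasure_withDensity_ofReal hθ.2
  have hint {h : Ω → E} : Integrable h ν ↔ Integrable (θ • h) μ :=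
    integrable_withDensity_ofReal_iff hθ.aemeasurable hθ_nonneg
  have hset {h : Ω → E} {s : Set Ω} (hs : MeasurableSet[m] s) :
      ∫ ω in s, h ω ∂ν = ∫ ω in s, (θ • h) ω ∂μ :=
    setIntegral_withDensity_ofReal hθ.aemeasurable hθ_nonneg (hm s hs)
  have hθf : Integrable (θ • f) μ := hint.1 hf
  have hθν : Integrable (θ • ν[f | m]) μ := hint.1 integrable_condExp
  have hpull : μ[θ • ν[f | m] | m] =ᵐ[μ] μ[θ | m] • ν[f | m] :=
    condExp_smul_of_aestronglyMeasurable_right hθ hθν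
      stronglyMeasurable_condExp.aestronglyMeasurable
  refine hpull.symm.trans ?_
  refine ae_eq_condExp_of_forall_setIntegral_eq hm hθf
    (fun s _ _ => integrable_condExp.integrableOn) (fun s hs _ => ?_)
    stronglyMeasurable_condExp.aestronglyMeasurable
  rw [setIntegral_condExp hm hθν hs, ← hset hs, setIntegral_condExp hm hf hs, hset hs]

end WithDensity

section Freezing

variable {α β E : Type*} [MeasurableSpace α] [MeasurableSpace β] [IsFiniteMeasure μ]
  {X : Ω → α} {Y : Ω → β}

lemma map_prodMk_restrict_eq_prod_of_indep (hm : m ≤ mΩ) (hX : Measurable[m] X) (hY : Measurable Y)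
    (hYm : Indep (MeasurableSpace.comap Y inferInstance) m μ) {s : Set Ω}
    (hs : MeasurableSet[m] s) :
    (μ.restrict s).map (fun ω => (X ω, Y ω)) = ((μ.restrict s).map X).prod (μ.map Y) := by
  have hXΩ : Measurable X := hX.mono hm le_rfl
  refine (Measure.prod_eq fun A B hA hB => ?_).symm
  have hinter : (fun ω => (X ω, Y ω)) ⁻¹' A ×ˢ B ∩ s = Y ⁻¹' B ∩ (X ⁻¹' A ∩ s) := by
    rw [Set.mk_preimage_prod, Set.inter_comm (X ⁻¹' A), Set.inter_assoc]
  rw [Measure.map_apply (hXΩ.prodMk hY) (hA.prod hB), Measure.map_apply hXΩ hA,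
    Measure.map_apply hY hB, Measure.restrict_apply (hXΩ.prodMk hY (hA.prod hB)),
    Measure.restrict_apply (hXΩ hA), hinter, mul_comm]
  exact (Indep_iff _ _ _).1 hYm _ _ ⟨B, hB, rfl⟩ ((hX hA).inter hs)

variable [NormedAddCommGroup E] {f : α × β → E}

lemma integrable_comp_prodMk_of_indep (hm : m ≤ mΩ) (hX : Measurable[m] X) (hY : Measurable Y)
    (hYm : Indep (MeasurableSpace.comap Y inferInstance) m μ) (hf : StronglyMeasurable f)
    (hf_right : ∀ x, Integrable (fun y => f (x, y)) (μ.map Y))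
    (hf_norm : Integrable (fun ω => ∫ y, ‖f (X ω, y)‖ ∂(μ.map Y)) μ) :
    Integrable (fun ω => f (X ω, Y ω)) μ := by
  have hXΩ : Measurable X := hX.mono hm le_rfl
  have hmap := map_prodMk_restrict_eq_prod_of_indep hm hX hY hYm MeasurableSet.univ
  rw [Measure.restrict_univ] at hmap
  refine Integrable.comp_measurable (f := fun ω => (X ω, Y ω)) (g := f) ?_ (hXΩ.prodMk hY)
  rw [hmap, integrable_prod_iff hf.aestronglyMeasurable]
  refine ⟨ae_of_all _ hf_right, ?_⟩
  exact (integrable_map_measure hf.norm.integral_prod_right'.aestronglyMeasurable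
    hXΩ.aemeasurable).2 hf_norm

theorem condExp_comp_prodMk_ae_eq_integral_of_indep [NormedSpace ℝ E] [CompleteSpace E]
    (hm : m ≤ mΩ) (hX : Measurable[m] X) (hY : Measurable Y)
    (hYm : Indep (MeasurableSpace.comap Y inferInstance) m μ) (hf : StronglyMeasurable f)
    (hf_int : Integrable (fun ω => f (X ω, Y ω)) μ) :
    μ[fun ω => f (X ω, Y ω) | m] =ᵐ[μ] fun ω => ∫ y, f (X ω, y) ∂(μ.map Y) := by
  have hXΩ : Measurable X := hX.mono hm le_rfl
  have hXY : Measurable fun ω => (X ω, Y ω) := hXΩ.prodMk hY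
  have hint {s : Set Ω} (hs : MeasurableSet[m] s) :
      Integrable f (((μ.restrict s).map X).prod (μ.map Y)) := by
    rw [← map_prodMk_restrict_eq_prod_of_indep hm hX hY hYm hs]
    exact (integrable_map_measure hf.aestronglyMeasurable hXY.aemeasurable).2 hf_int.integrableOn
  have hinner : StronglyMeasurable fun x => ∫ y, f (x, y) ∂(μ.map Y) := hf.integral_prod_right'
  refine (ae_eq_condExp_of_forall_setIntegral_eq hm hf_int (fun s hs _ => ?_) (fun s hs _ => ?_)
    (hinner.comp_measurable hX).aestronglyMeasurable).symm
  · exact (hint hs).integral_prod_left.comp_measurable hXΩ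
  · calc ∫ ω in s, ∫ y, f (X ω, y) ∂(μ.map Y) ∂μ
        = ∫ x, ∫ y, f (x, y) ∂(μ.map Y) ∂((μ.restrict s).map X) :=
          (integral_map hXΩ.aemeasurable hinner.aestronglyMeasurable).symm
      _ = ∫ p, f p ∂((μ.restrict s).map fun ω => (X ω, Y ω)) := by
          rw [map_prodMk_restrict_eq_prod_of_indep hm hX hY hYm hs, integral_prod _ (hint hs)]
      _ = ∫ ω in s, f (X ω, Y ω) ∂μ :=
          integral_map hXY.aemeasurable hf.aestronglyMeasurable

end Freezing

end CondExp

section CameronMartin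

variable {ι : Type*} [Fintype ι]

/-- The Cameron–Martin density `exp (-½‖d‖² + ⟨d, w⟩)` at `w` of the standard Gaussian measure
translated by `d`, with respect to the standard Gaussian measure itself. The Euclidean norm and
inner product are written as coordinate sums because `ι → ℝ` carries the sup norm. -/
noncomputable def cameronMartinDensity (d w : ι → ℝ) : ℝ :=
  Real.exp (-(1 / 2) * (∑ i, d i ^ 2) + ∑ i, d i * w i)

lemma cameronMartinDensity_pos (d w : ι → ℝ) : 0 < cameronMartinDensity d w :=
  Real.exp_pos _

lemma stronglyMeasurable_cameronMartinDensity :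
    StronglyMeasurable fun p : (ι → ℝ) × (ι → ℝ) => cameronMartinDensity p.1 p.2 := by
  unfold cameronMartinDensity
  exact Measurable.stronglyMeasurable (by fun_prop)

lemma cameronMartinDensity_eq_exp_mul_sqrt (d w : ι → ℝ) :
    cameronMartinDensity d w =
      Real.exp ((1 / 2) * ∑ i, d i ^ 2) * √(cameronMartinDensity ((2 : ℝ) • d) w) := by
  simp only [cameronMartinDensity, ← Real.exp_half, ← Real.exp_add, Pi.smul_apply, smul_eq_mul,
    mul_pow, mul_assoc, ← Finset.mul_sum]
  ring_nf

lemma cameronMartinDensity_smul_eq_mul {Ω : Type*} (D W : Ω → ι → ℝ) (δ : Ω → ℝ) :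
    (fun ω => cameronMartinDensity (D ω) (W ω)) • δ =
      (fun ω => Real.exp ((1 / 2) * ∑ i, D ω i ^ 2)) *
        ((fun ω => √(cameronMartinDensity ((2 : ℝ) • D ω) (W ω))) * δ) := by
  ext ω
  simp only [Pi.smul_apply', Pi.mul_apply, smul_eq_mul, ← mul_assoc,
    ← cameronMartinDensity_eq_exp_mul_sqrt]

lemma cameronMartinDensity_eq_prod (d w : ι → ℝ) :
    cameronMartinDensity d w = ∏ i, Real.exp (-(1 / 2) * d i ^ 2) * Real.exp (d i * w i) := by
  simp only [cameronMartinDensity, ← Real.exp_add, ← Real.exp_sum, Finset.sum_add_distrib,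
    Finset.mul_sum]

lemma integral_exp_mul_gaussianReal (t : ℝ) :
    ∫ x, Real.exp (t * x) ∂(gaussianReal 0 1) = Real.exp ((1 / 2) * t ^ 2) := by
  have hmgf := congrFun (mgf_fun_id_gaussianReal (μ := 0) (v := 1)) t
  simpa [mgf, div_eq_inv_mul] using hmgf

lemma integrable_cameronMartinDensity (d : ι → ℝ) :
    Integrable (cameronMartinDensity d) (Measure.pi fun _ => gaussianReal 0 1) := by
  simp only [funext (cameronMartinDensity_eq_prod d)]
  exact Integrable.fintype_prod (f := fun i x => Real.exp (-(1 / 2) * d i ^ 2) * Real.exp (d i * x))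
    fun i => (integrable_exp_mul_gaussianReal (d i)).const_mul _

lemma integral_cameronMartinDensity (d : ι → ℝ) :
    ∫ w, cameronMartinDensity d w ∂(Measure.pi fun _ => gaussianReal 0 1) = 1 := by
  simp only [cameronMartinDensity_eq_prod]
  rw [integral_fintype_prod_eq_prod
    fun i x => Real.exp (-(1 / 2) * d i ^ 2) * Real.exp (d i * x)]
  refine Finset.prod_eq_one fun i _ => ?_
  rw [integral_const_mul, integral_exp_mul_gaussianReal, ← Real.exp_add]
  simp

variable {Ω : Type*} {𝒢 mΩ : MeasurableSpace Ω} {P : Measure Ω} [IsProbabilityMeasure P]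
  {W D : Ω → ι → ℝ} {δ : Ω → ℝ}

lemma integrable_cameronMartinDensity_comp (h𝒢 : 𝒢 ≤ mΩ) (hW : Measurable W)
    (hWlaw : P.map W = Measure.pi fun _ => gaussianReal 0 1)
    (hWindep : Indep (MeasurableSpace.comap W inferInstance) 𝒢 P) (hD : Measurable[𝒢] D) :
    Integrable (fun ω => cameronMartinDensity (D ω) (W ω)) P := by
  refine integrable_comp_prodMk_of_indep h𝒢 hD hW hWindep stronglyMeasurable_cameronMartinDensity
    ?_ ?_
  · exact fun d => hWlaw ▸ integrable_cameronMartinDensity d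
  · simp [hWlaw, abs_of_pos (cameronMartinDensity_pos _ _), integral_cameronMartinDensity]

lemma condExp_cameronMartinDensity_comp (h𝒢 : 𝒢 ≤ mΩ) (hW : Measurable W)
    (hWlaw : P.map W = Measure.pi fun _ => gaussianReal 0 1)
    (hWindep : Indep (MeasurableSpace.comap W inferInstance) 𝒢 P) (hD : Measurable[𝒢] D) :
    P[fun ω => cameronMartinDensity (D ω) (W ω) | 𝒢] =ᵐ[P] 1 := by
  refine (condExp_comp_prodMk_ae_eq_integral_of_indep h𝒢 hD hW hWindep
    stronglyMeasurable_cameronMartinDensity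
    (integrable_cameronMartinDensity_comp h𝒢 hW hWlaw hWindep hD)).trans (ae_of_all _ fun ω => ?_)
  simp [hWlaw, integral_cameronMartinDensity]

lemma memLp_two_sqrt_cameronMartinDensity_comp (h𝒢 : 𝒢 ≤ mΩ) (hW : Measurable W)
    (hWlaw : P.map W = Measure.pi fun _ => gaussianReal 0 1)
    (hWindep : Indep (MeasurableSpace.comap W inferInstance) 𝒢 P) (hD : Measurable[𝒢] D) :
    MemLp (fun ω => √(cameronMartinDensity (D ω) (W ω))) 2 P := by
  have hint := integrable_cameronMartinDensity_comp h𝒢 hW hWlaw hWindep hD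
  refine (memLp_two_iff_integrable_sq
    (Real.continuous_sqrt.comp_aestronglyMeasurable hint.aestronglyMeasurable)).2 ?_
  simpa only [Real.sq_sqrt (cameronMartinDensity_pos _ _).le] using hint

lemma abs_condExp_sqrt_cameronMartinDensity_mul_le (h𝒢 : 𝒢 ≤ mΩ) (hW : Measurable W)
    (hWlaw : P.map W = Measure.pi fun _ => gaussianReal 0 1)
    (hWindep : Indep (MeasurableSpace.comap W inferInstance) 𝒢 P) (hD : Measurable[𝒢] D)
    (hδ : MemLp δ 2 P) :
    ∀ᵐ ω ∂P, |(P[(fun ω => √(cameronMartinDensity (D ω) (W ω))) * δ | 𝒢]) ω| ≤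
      √((P[δ ^ 2 | 𝒢]) ω) := by
  have hsq : (fun ω => √(cameronMartinDensity (D ω) (W ω))) ^ 2 =
      fun ω => cameronMartinDensity (D ω) (W ω) :=
    funext fun ω => Real.sq_sqrt (cameronMartinDensity_pos _ _).le
  filter_upwards [abs_condExp_mul_le_sqrt_mul_sqrt (m := 𝒢)
      (memLp_two_sqrt_cameronMartinDensity_comp h𝒢 hW hWlaw hWindep hD) hδ,
    condExp_cameronMartinDensity_comp h𝒢 hW hWlaw hWindep hD] with ω hle hone
  rwa [hsq, hone, Pi.one_apply, Real.sqrt_one, one_mul] at hle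

lemma abs_condExp_cameronMartinDensity_smul_le (h𝒢 : 𝒢 ≤ mΩ) (hW : Measurable W)
    (hWlaw : P.map W = Measure.pi fun _ => gaussianReal 0 1)
    (hWindep : Indep (MeasurableSpace.comap W inferInstance) 𝒢 P) (hD : Measurable[𝒢] D)
    (hδ : MemLp δ 2 P)
    (hint : Integrable ((fun ω => cameronMartinDensity (D ω) (W ω)) • δ) P) :
    ∀ᵐ ω ∂P, |(P[(fun ω => cameronMartinDensity (D ω) (W ω)) • δ | 𝒢]) ω| ≤
      Real.exp ((1 / 2) * ∑ i, D ω i ^ 2) * √((P[δ ^ 2 | 𝒢]) ω) := by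
  have h2D : Measurable[𝒢] fun ω => (2 : ℝ) • D ω := hD.const_smul (2 : ℝ)
  have hexp : StronglyMeasurable[𝒢] fun ω => Real.exp ((1 / 2) * ∑ i, D ω i ^ 2) :=
    Measurable.stronglyMeasurable (by fun_prop)
  have hsqrt := memLp_two_sqrt_cameronMartinDensity_comp h𝒢 hW hWlaw hWindep h2D
  rw [cameronMartinDensity_smul_eq_mul] at hint ⊢
  filter_upwards [condExp_mul_of_stronglyMeasurable_left hexp hint (hsqrt.integrable_mul hδ),
    abs_condExp_sqrt_cameronMartinDensity_mul_le h𝒢 hW hWlaw hWindep h2D hδ] with ω hpull hle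
  rw [hpull, Pi.mul_apply, abs_mul, Real.abs_exp]
  gcongr

lemma integrable_withDensity_cameronMartinDensity_of_bounded (h𝒢 : 𝒢 ≤ mΩ) (hW : Measurable W)
    (hWlaw : P.map W = Measure.pi fun _ => gaussianReal 0 1)
    (hWindep : Indep (MeasurableSpace.comap W inferInstance) 𝒢 P) (hD : Measurable[𝒢] D)
    (hDbound : ∃ C, ∀ ω i, |D ω i| ≤ C) (hδ : MemLp δ 2 P) :
    Integrable δ
      (P.withDensity fun ω => ENNReal.ofReal (cameronMartinDensity (D ω) (W ω))) := by
  obtain ⟨C, hC⟩ := hDbound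
  have hDΩ : Measurable D := hD.mono h𝒢 le_rfl
  have hsqrt : MemLp (fun ω => √(cameronMartinDensity ((2 : ℝ) • D ω) (W ω))) 2 P :=
    memLp_two_sqrt_cameronMartinDensity_comp h𝒢 hW hWlaw hWindep (hD.const_smul (2 : ℝ))
  have hbound (ω : Ω) :
      ‖Real.exp ((1 / 2) * ∑ i, D ω i ^ 2)‖ ≤ Real.exp ((1 / 2) * ∑ _i : ι, C ^ 2) := by
    rw [Real.norm_eq_abs, Real.abs_exp]
    gcongr Real.exp ((1 / 2) * ∑ i, ?_) with i
    exact sq_le_sq.2 ((hC ω i).trans (le_abs_self C))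
  rw [integrable_withDensity_ofReal_iff
    (integrable_cameronMartinDensity_comp h𝒢 hW hWlaw hWindep hD).aemeasurable
    (ae_of_all _ fun ω => (cameronMartinDensity_pos _ _).le), cameronMartinDensity_smul_eq_mul]
  exact (hsqrt.integrable_mul hδ).bdd_mul (Measurable.aestronglyMeasurable (by fun_prop))
    (ae_of_all _ hbound)

end CameronMartin

theorem drifted_bias_bound_general
    {ι Ω : Type*} [Fintype ι] (𝒢 : MeasurableSpace Ω) [mΩ : MeasurableSpace Ω]
    (P : Measure Ω) [IsProbabilityMeasure P] (h𝒢 : 𝒢 ≤ mΩ)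
    (W : Ω → ι → ℝ) (hWmeas : Measurable W)
    (hWlaw : Measure.map W P = Measure.pi fun _ => gaussianReal 0 1)
    (hWindep : Indep (MeasurableSpace.comap W inferInstance) 𝒢 P)
    (D : Ω → ι → ℝ) (hDmeas : Measurable[𝒢] D)
    (Q : Measure Ω)
    (hQ : Q = P.withDensity fun ω => ENNReal.ofReal (cameronMartinDensity (D ω) (W ω)))
    (δ : Ω → ℝ) (hδ : MemLp δ 2 P) (hδQ : Integrable δ Q) :
    ∀ᵐ ω ∂P, |(Q[δ | 𝒢]) ω| ≤
      Real.exp ((1 / 2) * ∑ i, D ω i ^ 2) * √((P[δ ^ 2 | 𝒢]) ω) := by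
  subst hQ
  have hΘ := integrable_cameronMartinDensity_comp h𝒢 hWmeas hWlaw hWindep hDmeas
  have hΘ_nonneg : 0 ≤ᵐ[P] fun ω => cameronMartinDensity (D ω) (W ω) :=
    ae_of_all _ fun ω => (cameronMartinDensity_pos _ _).le
  have hΘδ := (integrable_withDensity_ofReal_iff hΘ.aemeasurable hΘ_nonneg).1 hδQ
  filter_upwards [condExp_smul_condExp_withDensity h𝒢 hΘ hΘ_nonneg hδQ,
    condExp_cameronMartinDensity_comp h𝒢 hWmeas hWlaw hWindep hDmeas,
    abs_condExp_cameronMartinDensity_smul_le h𝒢 hWmeas hWlaw hWindep hDmeas hδ hΘδ]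
    with ω hBayes hone hle
  rw [Pi.smul_apply', hone, Pi.one_apply, one_smul] at hBayes
  rwa [hBayes]

/-- **Bias bound for the drifted estimators.**
If `W : Ω → ℝⁿ` has i.i.d. standard normal coordinates with `σ(W)` independent of the
sub-σ-algebra `𝒢`, `D` is `𝒢`-measurable and bounded, `Θ := exp(−½‖D‖² + ⟨D,W⟩)`,
`Q := P.withDensity Θ`, and `δ` has `P`-integrable square, then almost surely
`|E_Q[δ|𝒢]| ≤ exp(½‖D‖²) · (E_P[δ²|𝒢])^{1/2}`. -/
theorem drifted_bias_bound
    {Ω : Type*} (𝒢 : MeasurableSpace Ω) [mΩ : MeasurableSpace Ω]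
    (P : Measure Ω) [IsProbabilityMeasure P]
    {n : ℕ} (h𝒢 : 𝒢 ≤ mΩ)
    (W : Ω → Fin n → ℝ) (hWmeas : Measurable W)
    (hWlaw : Measure.map W P = stdGaussian n)
    (hWindep : Indep (MeasurableSpace.comap W inferInstance) 𝒢 P)
    (D : Ω → Fin n → ℝ) (hDmeas : Measurable[𝒢] D)
    (hDbound : ∃ C, ∀ ω i, |D ω i| ≤ C)
    (Θ : Ω → ℝ)
    (hΘ : ∀ ω, Θ ω = Real.exp (-(1 / 2) * (∑ i, (D ω i) ^ 2) + ∑ i, D ω i * W ω i))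
    (Q : Measure Ω) (hQ : Q = P.withDensity fun ω => ENNReal.ofReal (Θ ω))
    (δ : Ω → ℝ) (hδmeas : Measurable δ)
    (hδsq : Integrable (fun ω => (δ ω) ^ 2) P) :
    ∀ᵐ ω ∂P, |(Q[δ|𝒢]) ω| ≤
      Real.exp ((1 / 2) * ∑ i, (D ω i) ^ 2) *
        Real.sqrt ((P[fun ω => (δ ω) ^ 2|𝒢]) ω) := by
  obtain rfl : Θ = fun ω => cameronMartinDensity (D ω) (W ω) := funext hΘ
  have hδ : MemLp δ 2 P := (memLp_two_iff_integrable_sq hδmeas.aestronglyMeasurable).2 hδsq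
  exact drifted_bias_bound_general 𝒢 P h𝒢 W hWmeas hWlaw hWindep D hDmeas Q hQ δ hδ <|
    hQ ▸ integrable_withDensity_cameronMartinDensity_of_bounded h𝒢 hWmeas hWlaw hWindep hDmeas
      hDbound hδ
end
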